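/- Let n and q be integers with n > 2 and q ≥ 2, and let r be the largest prime divisor of n. Then Φ*_n(q) = Φ_n(q) if r does not divide Φ_n(q), and Φ*_n(q) = Φ_n(q)/r if r divides Φ_n(q). -/

import Mathlib

/-- `Phi n q` is the `n`-th cyclotomic polynomial evaluated at `q`. -/
noncomputable def Phi (n q : ℕ) : ℕ :=
  ((Polynomial.cyclotomic n ℤ).eval (q : ℤ)).toNat

/-- `PhiStar n q` is the largest divisor of `Phi n q` that is coprime to
`∏_{k=1}^{n-1} (q^k - 1)` (an empty product is `1`). -/
noncomputable def PhiStar (n q : ℕ) : ℕ :=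
  sSup {m : ℕ | m ∣ Phi n q ∧ Nat.Coprime m (∏ k ∈ Finset.Ico 1 n, (q ^ k - 1))}

/-!
Write `n = p ^ a * m` with `p` prime and `p ∤ m`. Modulo `p`, the roots of `Φ_n` are the primitive
`m`-th roots of unity, so `p ∣ Φ_n(q)` means that `q` has order `m` modulo `p`; in particular
`m ∣ p - 1`. If `p ∤ n`, then `m = n`, so `p` divides no `q ^ k - 1` with `0 < k < n`. If `p ∣ n`,
then `m ∣ p - 1` forces `p` to be the largest prime divisor of `n`, and `m ∣ n / p` gives
`p ∣ q ^ (n / p) - 1`, so `p` has to be removed from `Φ_n(q)`. It occurs there only once, because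
`Φ_n(q)` divides `∑_{i < p} (q ^ (n / p)) ^ i`: for odd `p` this sum has `p`-adic valuation `1` by
lifting the exponent, and for `p = 2`, where `n > 2` is a power of `2`, it is `y ^ 2 + 1` with
`y = q ^ (n / 4)`, which is not divisible by `4`.
-/

open Polynomial

section CyclotomicValues

variable {p n d : ℕ} {q : ℤ}

lemma dvd_eval_cyclotomic_iff_isPrimitiveRoot_ordCompl (hp : p.Prime) (hn : n ≠ 0) :
    (p : ℤ) ∣ (cyclotomic n ℤ).eval q ↔ IsPrimitiveRoot (q : ZMod p) (ordCompl[p] n) := by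
  have : Fact p.Prime := ⟨hp⟩
  have : NeZero ((ordCompl[p] n : ℕ) : ZMod p) :=
    ⟨mt (ZMod.natCast_eq_zero_iff _ p).1 (Nat.not_dvd_ordCompl hp hn)⟩
  rw [← isRoot_cyclotomic_prime_pow_mul_iff_of_charP (p := p) (k := n.factorization p),
    Nat.ordProj_mul_ordCompl_eq_self, IsRoot.def, ← map_cyclotomic_int n (ZMod p),
    eval_intCast_map, eq_intCast, ZMod.intCast_zmod_eq_zero_iff_dvd, Int.cast_id]

lemma dvd_pow_sub_one_iff_of_dvd_eval_cyclotomic (hp : p.Prime) (hn : n ≠ 0)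
    (h : (p : ℤ) ∣ (cyclotomic n ℤ).eval q) (k : ℕ) :
    (p : ℤ) ∣ q ^ k - 1 ↔ ordCompl[p] n ∣ k := by
  rw [← ((dvd_eval_cyclotomic_iff_isPrimitiveRoot_ordCompl hp hn).1 h).pow_eq_one_iff_dvd,
    ← sub_eq_zero, ← ZMod.intCast_zmod_eq_zero_iff_dvd, Int.cast_sub, Int.cast_pow, Int.cast_one]

lemma dvd_pow_sub_one_of_dvd_eval_cyclotomic_mul (hp : p.Prime) (hd : d ≠ 0)
    (h : (p : ℤ) ∣ (cyclotomic (p * d) ℤ).eval q) : (p : ℤ) ∣ q ^ d - 1 := by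
  have hn : p * d ≠ 0 := mul_ne_zero hp.ne_zero hd
  rw [dvd_pow_sub_one_iff_of_dvd_eval_cyclotomic hp hn h]
  exact (Nat.coprime_ordCompl hp hn).symm.dvd_of_dvd_mul_left (Nat.ordCompl_dvd (p * d) p)

lemma prime_le_of_dvd_eval_cyclotomic {l : ℕ} (hp : p.Prime) (hn : n ≠ 0)
    (h : (p : ℤ) ∣ (cyclotomic n ℤ).eval q) (hl : l.Prime) (hln : l ∣ n) : l ≤ p := by
  have : Fact p.Prime := ⟨hp⟩
  have hprim := (dvd_eval_cyclotomic_iff_isPrimitiveRoot_ordCompl hp hn).1 h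
  have hq : (q : ZMod p) ≠ 0 := (hprim.isUnit (Nat.ordCompl_pos p hn).ne').ne_zero
  have hdvd : ordCompl[p] n ∣ p - 1 :=
    hprim.dvd_of_pow_eq_one _ (ZMod.pow_card_sub_one_eq_one hq)
  rw [← Nat.ordProj_mul_ordCompl_eq_self n p, hl.dvd_mul] at hln
  obtain hlp | hlm := hln
  · exact Nat.le_of_dvd hp.pos (hl.dvd_of_dvd_pow hlp)
  · exact (Nat.le_of_dvd (Nat.sub_pos_of_lt hp.one_lt) (hlm.trans hdvd)).trans (Nat.sub_le p 1)

lemma cyclotomic_mul_dvd_geom_sum (R : Type*) [CommRing R] {k : ℕ} (hk : 1 < k) (hd : d ≠ 0) :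
    cyclotomic (k * d) R ∣ ∑ i ∈ Finset.range k, (X ^ d) ^ i := by
  have hmem : d ∈ (k * d).properDivisors :=
    Nat.mem_properDivisors.2 ⟨dvd_mul_left d k, lt_mul_of_one_lt_left (Nat.pos_of_ne_zero hd) hk⟩
  obtain ⟨f, hf⟩ := X_pow_sub_one_mul_cyclotomic_dvd_X_pow_sub_one_of_dvd R hmem
  have hmonic : (X ^ d - 1 : R[X]).Monic := monic_X_pow_sub_C 1 hd
  refine ⟨f, hmonic.isRegular.left ?_⟩
  calc (X ^ d - 1) * ∑ i ∈ Finset.range k, (X ^ d) ^ i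
      = X ^ (k * d) - 1 := by rw [mul_geom_sum, ← pow_mul, mul_comm d k]
    _ = (X ^ d - 1) * (cyclotomic (k * d) R * f) := by rw [hf, mul_assoc]

lemma eval_cyclotomic_mul_dvd_geom_sum {R : Type*} [CommRing R] {k : ℕ} (hk : 1 < k) (hd : d ≠ 0)
    (x : R) : (cyclotomic (k * d) R).eval x ∣ ∑ i ∈ Finset.range k, (x ^ d) ^ i := by
  simpa only [eval_finsetSum, eval_pow, eval_X] using
    eval_dvd (x := x) (cyclotomic_mul_dvd_geom_sum R hk hd)

lemma not_sq_dvd_geom_sum_of_odd {R : Type*} [CommRing R] [IsDomain R] {x : R}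
    (hp : Prime (p : R)) (hodd : Odd p) (hx : (p : R) ∣ x - 1) :
    ¬ (p : R) ^ 2 ∣ ∑ i ∈ Finset.range p, x ^ i := by
  have hpx : ¬ (p : R) ∣ x := fun h ↦ hp.not_isUnit (isUnit_of_dvd_one ((dvd_sub_right h).1 hx))
  have hmult := emultiplicity_geom_sum₂_eq_one hp hodd hx hpx
  simp only [one_pow, mul_one] at hmult
  rw [← emultiplicity_lt_iff_not_dvd, hmult]
  norm_num

lemma not_four_dvd_eval_cyclotomic (hn : 2 < n) : ¬ 4 ∣ (cyclotomic n ℤ).eval q := by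
  intro h
  have h_two : ((2 : ℕ) : ℤ) ∣ (cyclotomic n ℤ).eval q := dvd_trans (by norm_num) h
  obtain ⟨e, rfl⟩ : 4 ∣ n := by
    obtain h_four | ⟨l, hl, hln, hodd⟩ := Nat.four_dvd_or_exists_odd_prime_and_dvd_of_two_lt hn
    · exact h_four
    · have hle := prime_le_of_dvd_eval_cyclotomic Nat.prime_two (by lia) h_two hl hln
      obtain rfl := le_antisymm hle hl.two_le
      exact absurd hodd (by decide)
  have hsum : 4 ∣ (q ^ e) ^ 2 + 1 := by
    have hdvd := eval_cyclotomic_mul_dvd_geom_sum one_lt_two (d := 2 * e) (by lia) q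
    rw [← mul_assoc, geom_sum_two, pow_mul'] at hdvd
    exact h.trans hdvd
  have hmod : (((q ^ e) ^ 2 + 1 : ℤ) : ZMod 4) = 0 :=
    (ZMod.intCast_zmod_eq_zero_iff_dvd _ 4).2 hsum
  have hne : ∀ y : ZMod 4, y ^ 2 + 1 ≠ 0 := by decide
  exact hne ((q ^ e : ℤ) : ZMod 4) (by exact_mod_cast hmod)

lemma not_sq_dvd_eval_cyclotomic (hp : p.Prime) (hn : 2 < n) (hpn : p ∣ n) :
    ¬ (p : ℤ) ^ 2 ∣ (cyclotomic n ℤ).eval q := by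
  intro hsq
  obtain rfl | hodd := hp.eq_two_or_odd'
  · exact not_four_dvd_eval_cyclotomic hn (by simpa using hsq)
  obtain ⟨d, rfl⟩ := hpn
  have hd : d ≠ 0 := by rintro rfl; lia
  have hx : (p : ℤ) ∣ q ^ d - 1 :=
    dvd_pow_sub_one_of_dvd_eval_cyclotomic_mul hp hd ((dvd_pow_self _ two_ne_zero).trans hsq)
  exact not_sq_dvd_geom_sum_of_odd (Nat.prime_iff_prime_int.1 hp) hodd hx
    (hsq.trans (eval_cyclotomic_mul_dvd_geom_sum hp.one_lt hd q))

end CyclotomicValues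

lemma isGreatest_dvd_mul_and_coprime {b c N : ℕ} (hb : b ≠ 0) (hc : c ∣ N) (hbN : b.Coprime N) :
    IsGreatest {m : ℕ | m ∣ c * b ∧ m.Coprime N} b :=
  ⟨⟨dvd_mul_left b c, hbN⟩, fun _ hm ↦
    Nat.le_of_dvd (Nat.pos_of_ne_zero hb) ((hm.2.coprime_dvd_right hc).dvd_of_dvd_mul_left hm.1)⟩

section Phi

variable {b c n p q : ℕ}

lemma natCast_phi (n : ℕ) (hq : 0 < q) : (Phi n q : ℤ) = (cyclotomic n ℤ).eval (q : ℤ) :=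
  Int.toNat_of_nonneg (cyclotomic_nonneg n (by exact_mod_cast hq))

lemma phi_ne_zero (n : ℕ) (hq : 1 < q) : Phi n q ≠ 0 := by
  rw [← Int.natCast_ne_zero, natCast_phi n (zero_lt_one.trans hq)]
  exact (cyclotomic_pos' n (by exact_mod_cast hq)).ne'

lemma dvd_phi_iff (hq : 0 < q) : b ∣ Phi n q ↔ (b : ℤ) ∣ (cyclotomic n ℤ).eval (q : ℤ) := by
  rw [← natCast_phi n hq, Int.natCast_dvd_natCast]

lemma dvd_pow_sub_one_iff_natCast_dvd (hq : 0 < q) (k : ℕ) :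
    p ∣ q ^ k - 1 ↔ (p : ℤ) ∣ (q : ℤ) ^ k - 1 := by
  rw [← Int.natCast_dvd_natCast, Nat.cast_pred (pow_pos hq k), Nat.cast_pow]

lemma coprime_prod_pow_sub_one (hn : n ≠ 0) (hq : 0 < q) (hb : b ∣ Phi n q) (hbn : b.Coprime n) :
    b.Coprime (∏ k ∈ Finset.Ico 1 n, (q ^ k - 1)) := by
  refine Nat.Coprime.prod_right fun k hk ↦ Nat.coprime_of_dvd fun p hp hpb hpk ↦ ?_
  have hpn : ¬ p ∣ n := fun hpn ↦ Nat.not_coprime_of_dvd_of_dvd hp.one_lt hpb hpn hbn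
  rw [dvd_pow_sub_one_iff_natCast_dvd hq, dvd_pow_sub_one_iff_of_dvd_eval_cyclotomic hp hn
    ((dvd_phi_iff hq).1 (hpb.trans hb)),
    (Nat.ordCompl_eq_self_iff_zero_or_not_dvd n hp).2 (Or.inr hpn)] at hpk
  rw [Finset.mem_Ico] at hk
  exact hk.2.not_ge (Nat.le_of_dvd hk.1 hpk)

lemma prime_dvd_prod_pow_sub_one (hn : n ≠ 0) (hq : 0 < q) (hp : p.Prime) (hpn : p ∣ n)
    (h : p ∣ Phi n q) : p ∣ ∏ k ∈ Finset.Ico 1 n, (q ^ k - 1) := by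
  obtain ⟨d, rfl⟩ := hpn
  have hd : d ≠ 0 := right_ne_zero_of_mul hn
  have hd_pos : 0 < d := Nat.pos_of_ne_zero hd
  have hmem : d ∈ Finset.Ico 1 (p * d) :=
    Finset.mem_Ico.2 ⟨hd_pos, lt_mul_of_one_lt_left hd_pos hp.one_lt⟩
  refine dvd_trans ?_ (Finset.dvd_prod_of_mem _ hmem)
  rw [dvd_pow_sub_one_iff_natCast_dvd hq]
  exact dvd_pow_sub_one_of_dvd_eval_cyclotomic_mul hp hd ((dvd_phi_iff hq).1 h)

lemma phiStar_eq_of_phi_eq_mul (hn : n ≠ 0) (hq : 1 < q) (h : Phi n q = c * b)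
    (hc : c ∣ ∏ k ∈ Finset.Ico 1 n, (q ^ k - 1)) (hbn : b.Coprime n) : PhiStar n q = b := by
  have hb : b ≠ 0 := right_ne_zero_of_mul (h ▸ phi_ne_zero n hq)
  have hcop := coprime_prod_pow_sub_one hn (zero_lt_one.trans hq) (h ▸ dvd_mul_left b c) hbn
  rw [PhiStar, h]
  exact (isGreatest_dvd_mul_and_coprime hb hc hcop).csSup_eq

lemma coprime_of_dvd_phi {r : ℕ} (hn : n ≠ 0) (hq : 0 < q) (hr : r.Prime)
    (hrn : r ∣ n) (hmax : ∀ p : ℕ, p.Prime → p ∣ n → p ≤ r) (hb : b ∣ Phi n q) (hrb : ¬ r ∣ b) :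
    b.Coprime n := by
  refine Nat.coprime_of_dvd fun p hp hpb hpn ↦ hrb ?_
  have hrp : r ≤ p :=
    prime_le_of_dvd_eval_cyclotomic hp hn ((dvd_phi_iff hq).1 (hpb.trans hb)) hr hrn
  rwa [hrp.antisymm (hmax p hp hpn)]

end Phi

/-- Lemma 4(b), case `n > 2`: with `r` the largest prime divisor of `n`,
`Φ*_n(q) = Φ_n(q)` if `r ∤ Φ_n(q)` and `Φ*_n(q) = Φ_n(q)/r` if `r ∣ Φ_n(q)`. -/
theorem phiStar_of_largest_prime (n q r : ℕ) (hn : 2 < n) (hq : 2 ≤ q)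
    (hr : r.Prime) (hrn : r ∣ n) (hmax : ∀ p : ℕ, p.Prime → p ∣ n → p ≤ r) :
    (¬ r ∣ Phi n q → PhiStar n q = Phi n q) ∧
    (r ∣ Phi n q → PhiStar n q = Phi n q / r) := by
  have hn_ne : n ≠ 0 := by lia
  have hq_pos : 0 < q := by lia
  refine ⟨fun h ↦ ?_, fun h ↦ ?_⟩
  · exact phiStar_eq_of_phi_eq_mul hn_ne hq (one_mul _).symm (one_dvd _)
      (coprime_of_dvd_phi hn_ne hq_pos hr hrn hmax dvd_rfl h)
  · have hr_prod := prime_dvd_prod_pow_sub_one hn_ne hq_pos hr hrn h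
    obtain ⟨b, hb⟩ := h
    have hrb : ¬ r ∣ b := fun hrb ↦ by
      refine not_sq_dvd_eval_cyclotomic hr hn hrn (q := q) ?_
      rw [← Nat.cast_pow, ← dvd_phi_iff hq_pos, hb, sq]
      exact mul_dvd_mul_left r hrb
    rw [hb, Nat.mul_div_cancel_left b hr.pos]
    exact phiStar_eq_of_phi_eq_mul hn_ne hq hb hr_prod
      (coprime_of_dvd_phi hn_ne hq_pos hr hrn hmax (hb ▸ dvd_mul_left b r) hrb)
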